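/- Let P and Q be probability measures on a measurable space (Ω, ℱ) with P absolutely continuous with respect to Q, and let L = log(dP/dQ) where dP/dQ is the Radon–Nikodym derivative. Let σ ∈ (0, e^{−2}], B ≥ 1, r ∈ [0,1], and let W₁, W₂ : Ω → [0,∞) be measurable functions such that |L| ≤ W₁ + W₂ + log(1/σ) holds P-almost everywhere and such that for i ∈ {1,2} and every t ≥ 1 one has P(W_i ≥ B t^r) ≤ e^{−t}. Then for every v ≥ 1: ∫ L² dP ≤ 3 (2 B v^r + log(1/σ))² · KL(P‖Q) + 64 (2 B v^r + log(1/σ))² · e^{−v}. -/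

import Mathlib

open MeasureTheory Real
open scoped ENNReal Classical

/-- The Kullback-Leibler divergence `KL(P‖Q) = ∫ log(dP/dQ) dP ∈ [0,∞]`, equal to `+∞` if
`P` is not absolutely continuous with respect to `Q` or the log-likelihood ratio is not
integrable. -/
noncomputable def klDiv {Ω : Type*} [MeasurableSpace Ω] (P Q : Measure Ω) : ℝ≥0∞ :=
  if P ≪ Q ∧ Integrable (llr P Q) P then ENNReal.ofReal (∫ ω, llr P Q ω ∂P) else ⊤

/-!
Write `L = log (dP/dQ)` and split `∫ L² dP` at the level `M = 2 B v ^ r + log (1 / σ)`.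

Below `M`, compare `L²` with `e^{-L} - 1 + L ≥ 0`, whose `P`-integral is at most `KL(P‖Q)`. The Padé
bound `e^x ≤ (2 + x) / (2 - x)` gives `L² ≤ (2 + |L|) (e^{-L} - 1 + L)`, and `2 + M ≤ 3 M²`
since `1 ≤ M`.

Above `M`, use shells of width `M`. Since `(v + k) ^ r ≤ (1 + k) v ^ r` when `r ≤ 1`, the event
`(k + 1) M ≤ |L|` forces some `W_i ≥ B (v + k) ^ r`, so its probability is at most
`2 e^{-v} e^{-k}`, and `∑ (k + 2)² e^{-k} ≤ 4 ∑ (k + 2).choose 2 / 2 ^ k = 32`.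
-/

lemma le_log_one_div {σ a : ℝ} (hσ : 0 < σ) (h : σ ≤ exp (-a)) : a ≤ log (1 / σ) := by
  rw [one_div, log_inv]
  linarith [(log_le_iff_le_exp hσ).2 h]

lemma sq_le_two_add_abs_mul (x : ℝ) : x ^ 2 ≤ (2 + |x|) * (exp (-x) - 1 + x) := by
  rcases le_total x 0 with hx | hx
  · have hquad := quadratic_le_exp_of_nonneg (neg_nonneg.2 hx)
    nlinarith [abs_nonneg x]
  · have hpade : 2 - x ≤ (2 + x) * exp (-x) := by
      rcases lt_or_ge x 2 with hx2 | hx2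
      · have hexp := (le_div_iff₀ (sub_pos.2 hx2)).1 (exp_le_two_add_div_two_sub hx hx2)
        rwa [exp_neg, ← div_eq_mul_inv, le_div_iff₀' (exp_pos x)]
      · nlinarith [exp_pos (-x)]
    rw [abs_of_nonneg hx]
    linarith

lemma add_rpow_le_one_add_mul_rpow {v s r : ℝ} (hv : 1 ≤ v) (hs : 0 ≤ s) (hr : r ≤ 1) :
    (v + s) ^ r ≤ (1 + s) * v ^ r := by
  have hsplit : v + s = (1 + s / v) * v := by field_simp
  have hbase : 1 ≤ 1 + s / v := le_add_of_nonneg_right (by positivity)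
  calc (v + s) ^ r = (1 + s / v) ^ r * v ^ r := by
        rw [hsplit, mul_rpow (by positivity) (by positivity)]
    _ ≤ (1 + s / v) * v ^ r := by
        gcongr
        exact rpow_le_self_of_one_le hbase hr
    _ ≤ (1 + s) * v ^ r := by
        gcongr
        exact div_le_self hs hv

lemma sq_add_two_le_four_mul_choose (k : ℕ) : ((k : ℝ) + 2) ^ 2 ≤ 4 * (k + 2).choose 2 := by
  rw [Nat.cast_choose_two]
  push_cast
  nlinarith [Nat.cast_nonneg (α := ℝ) k]

lemma exp_neg_natCast_le_half_pow (k : ℕ) : exp (-k) ≤ (1 / 2) ^ k := by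
  have hhalf : exp (-1) ≤ 1 / 2 := by
    rw [exp_neg, one_div]
    exact inv_anti₀ two_pos (by linarith [add_one_le_exp 1])
  calc exp (-k) = exp (-1) ^ k := by rw [← exp_nat_mul, mul_neg_one]
    _ ≤ (1 / 2) ^ k := by gcongr

lemma tsum_ofReal_sq_add_two_mul_exp_neg_le :
    ∑' k : ℕ, ENNReal.ofReal (((k : ℝ) + 2) ^ 2 * exp (-k)) ≤ 32 := by
  have hsum : HasSum (fun k : ℕ => 4 * ((k + 2).choose 2 * (1 / 2 : ℝ) ^ k)) 32 := by
    have hgeom := (hasSum_choose_mul_geometric_of_norm_lt_one 2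
      (by norm_num : ‖(1 / 2 : ℝ)‖ < 1)).mul_left 4
    rwa [show (4 * (1 / (1 - 1 / 2) ^ (2 + 1)) : ℝ) = 32 by norm_num] at hgeom
  calc ∑' k : ℕ, ENNReal.ofReal (((k : ℝ) + 2) ^ 2 * exp (-k))
      ≤ ∑' k : ℕ, ENNReal.ofReal (4 * ((k + 2).choose 2 * (1 / 2 : ℝ) ^ k)) := by
        refine ENNReal.tsum_le_tsum fun k => ENNReal.ofReal_le_ofReal ?_
        rw [← mul_assoc]
        exact mul_le_mul (sq_add_two_le_four_mul_choose k) (exp_neg_natCast_le_half_pow k)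
          (exp_nonneg _) (by positivity)
    _ = 32 := by
        rw [← ENNReal.ofReal_tsum_of_nonneg (fun k => by positivity) hsum.summable, hsum.tsum_eq]
        norm_num

section KullbackLeibler

variable {Ω : Type*} [MeasurableSpace Ω] {P Q : Measure Ω}

lemma klDiv_eq_informationTheory_klDiv [IsFiniteMeasure P] [IsFiniteMeasure Q]
    (h : P Set.univ = Q Set.univ) : klDiv P Q = InformationTheory.klDiv P Q := by
  simp [klDiv, InformationTheory.klDiv_def, measureReal_def, h]

lemma mul_exp_neg_log_sub_one_add_log {y : ℝ} (hy : 0 < y) :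
    y * (exp (-log y) - 1 + log y) = InformationTheory.klFun y := by
  rw [exp_neg, exp_log hy, InformationTheory.klFun_apply]
  field_simp
  ring

lemma lintegral_exp_neg_llr_sub_one_add_llr_le_klDiv [IsFiniteMeasure P] [IsFiniteMeasure Q] :
    ∫⁻ ω, ENNReal.ofReal (exp (-llr P Q ω) - 1 + llr P Q ω) ∂P
      ≤ InformationTheory.klDiv P Q := by
  by_cases hPQ : P ≪ Q
  swap
  · simp [hPQ]
  rw [InformationTheory.klDiv_eq_lintegral_klFun_of_ac hPQ,
    ← lintegral_rnDeriv_mul hPQ (by fun_prop)]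
  refine lintegral_mono_ae ?_
  filter_upwards [P.rnDeriv_lt_top Q] with ω hfin
  rcases eq_or_ne (P.rnDeriv Q ω) 0 with hzero | hzero
  · simp [hzero]
  · rw [← mul_exp_neg_log_sub_one_add_log (ENNReal.toReal_pos hzero hfin.ne),
      ENNReal.ofReal_mul ENNReal.toReal_nonneg, ENNReal.ofReal_toReal hfin.ne]
    rfl

lemma setLIntegral_llr_sq_le_klDiv [IsFiniteMeasure P] [IsFiniteMeasure Q] {M : ℝ} (hM : 0 ≤ M) :
    ∫⁻ ω in {ω | M ≤ |llr P Q ω|}ᶜ, ENNReal.ofReal (llr P Q ω ^ 2) ∂P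
      ≤ ENNReal.ofReal (2 + M) * InformationTheory.klDiv P Q :=
  calc ∫⁻ ω in {ω | M ≤ |llr P Q ω|}ᶜ, ENNReal.ofReal (llr P Q ω ^ 2) ∂P
      ≤ ∫⁻ ω in {ω | M ≤ |llr P Q ω|}ᶜ,
          ENNReal.ofReal (2 + M) * ENNReal.ofReal (exp (-llr P Q ω) - 1 + llr P Q ω) ∂P := by
        refine setLIntegral_mono (by fun_prop) fun ω (hω : ¬ M ≤ |llr P Q ω|) => ?_
        rw [← ENNReal.ofReal_mul (by positivity)]
        refine ENNReal.ofReal_le_ofReal ((sq_le_two_add_abs_mul _).trans ?_)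
        gcongr
        · linarith [add_one_le_exp (-llr P Q ω)]
        · exact (not_le.1 hω).le
    _ ≤ ∫⁻ ω, ENNReal.ofReal (2 + M) *
          ENNReal.ofReal (exp (-llr P Q ω) - 1 + llr P Q ω) ∂P := setLIntegral_le_lintegral _ _
    _ ≤ ENNReal.ofReal (2 + M) * InformationTheory.klDiv P Q := by
        rw [lintegral_const_mul _ (by fun_prop)]
        gcongr
        exact lintegral_exp_neg_llr_sub_one_add_llr_le_klDiv

end KullbackLeibler

section Tails

variable {Ω : Type*} [MeasurableSpace Ω] {μ : Measure Ω} {f : Ω → ℝ}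

lemma setLIntegral_sq_le_tsum_measure (hf : Measurable f) {M : ℝ} (hM : 0 < M) :
    ∫⁻ ω in {ω | M ≤ |f ω|}, ENNReal.ofReal (f ω ^ 2) ∂μ
      ≤ ∑' k : ℕ, ENNReal.ofReal (((k + 2) * M) ^ 2) * μ {ω | (k + 1) * M ≤ |f ω|} := by
  have hset (c : ℝ) : MeasurableSet {ω | c ≤ |f ω|} := measurableSet_le measurable_const hf.norm
  simp_rw [← lintegral_indicator_const (hset _), ← lintegral_indicator (hset _)]
  rw [← lintegral_tsum fun k => (measurable_const.indicator (hset _)).aemeasurable]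
  refine lintegral_mono fun ω => Set.indicator_apply_le' (fun hω => ?_) fun _ => zero_le
  obtain ⟨k, hk⟩ : ∃ k, ⌊|f ω| / M⌋₊ = k + 1 :=
    Nat.exists_eq_add_one.2 (Nat.floor_pos.2 ((one_le_div hM).2 hω))
  obtain ⟨hlower, hupper⟩ := (Nat.floor_eq_iff (by positivity)).1 hk
  push_cast at hlower hupper
  rw [le_div_iff₀ hM] at hlower
  rw [div_lt_iff₀ hM] at hupper
  refine le_trans ?_ (ENNReal.le_tsum k)
  rw [Set.indicator_of_mem (show ω ∈ {ω | (k + 1) * M ≤ |f ω|} from hlower), ← sq_abs]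
  gcongr
  linarith

lemma setLIntegral_sq_le_of_exp_tail (hf : Measurable f) {M C : ℝ} (hM : 0 < M)
    (htail : ∀ k : ℕ, μ {ω | (k + 1) * M ≤ |f ω|} ≤ ENNReal.ofReal (C * exp (-k))) :
    ∫⁻ ω in {ω | M ≤ |f ω|}, ENNReal.ofReal (f ω ^ 2) ∂μ ≤ ENNReal.ofReal (32 * (C * M ^ 2)) :=
  calc ∫⁻ ω in {ω | M ≤ |f ω|}, ENNReal.ofReal (f ω ^ 2) ∂μ
      ≤ ∑' k : ℕ, ENNReal.ofReal (((k + 2) * M) ^ 2) * μ {ω | (k + 1) * M ≤ |f ω|} :=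
        setLIntegral_sq_le_tsum_measure hf hM
    _ ≤ ∑' k : ℕ, ENNReal.ofReal (((k + 2) * M) ^ 2) * ENNReal.ofReal (C * exp (-k)) := by
        gcongr with k
        exact htail k
    _ = (∑' k : ℕ, ENNReal.ofReal (((k : ℝ) + 2) ^ 2 * exp (-k))) * ENNReal.ofReal (C * M ^ 2) := by
        rw [← ENNReal.tsum_mul_right]
        congr with k
        rw [← ENNReal.ofReal_mul (by positivity), ← ENNReal.ofReal_mul (by positivity)]
        ring_nf
    _ ≤ 32 * ENNReal.ofReal (C * M ^ 2) := by
        gcongr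
        exact tsum_ofReal_sq_add_two_mul_exp_neg_le
    _ = ENNReal.ofReal (32 * (C * M ^ 2)) := by
        rw [ENNReal.ofReal_mul (by norm_num : (0 : ℝ) ≤ 32), ENNReal.ofReal_ofNat]

lemma measure_le_of_ae_le_add {W₁ W₂ : Ω → ℝ} {a b l : ℝ}
    (hbound : ∀ᵐ ω ∂μ, f ω ≤ W₁ ω + W₂ ω + l) :
    μ {ω | a + b + l ≤ f ω} ≤ μ {ω | a ≤ W₁ ω} + μ {ω | b ≤ W₂ ω} := by
  refine (measure_mono_ae ?_).trans (measure_union_le _ _)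
  filter_upwards [hbound] with ω hω (hf : a + b + l ≤ f ω)
  change a ≤ W₁ ω ∨ b ≤ W₂ ω
  by_contra! hlt
  linarith

lemma measure_succ_mul_le_of_rpow_tails {W₁ W₂ : Ω → ℝ} {B r l v : ℝ}
    (hB : 0 ≤ B) (hr : r ≤ 1) (hl : 0 ≤ l) (hv : 1 ≤ v)
    (hbound : ∀ᵐ ω ∂μ, f ω ≤ W₁ ω + W₂ ω + l)
    (hW₁ : ∀ t : ℝ, 1 ≤ t → μ {ω | B * t ^ r ≤ W₁ ω} ≤ ENNReal.ofReal (exp (-t)))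
    (hW₂ : ∀ t : ℝ, 1 ≤ t → μ {ω | B * t ^ r ≤ W₂ ω} ≤ ENNReal.ofReal (exp (-t))) (k : ℕ) :
    μ {ω | (k + 1) * (2 * B * v ^ r + l) ≤ f ω} ≤ ENNReal.ofReal (2 * exp (-v) * exp (-k)) := by
  have hlevel : B * (v + k) ^ r + B * (v + k) ^ r + l ≤ (k + 1) * (2 * B * v ^ r + l) := by
    have hrpow := mul_le_mul_of_nonneg_left
      (add_rpow_le_one_add_mul_rpow hv k.cast_nonneg hr) hB
    nlinarith [mul_nonneg k.cast_nonneg hl]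
  have hvk : 1 ≤ v + k := le_add_of_le_of_nonneg hv k.cast_nonneg
  calc μ {ω | (k + 1) * (2 * B * v ^ r + l) ≤ f ω}
      ≤ μ {ω | B * (v + k) ^ r + B * (v + k) ^ r + l ≤ f ω} :=
        measure_mono fun ω hω => hlevel.trans hω
    _ ≤ μ {ω | B * (v + k) ^ r ≤ W₁ ω} + μ {ω | B * (v + k) ^ r ≤ W₂ ω} :=
        measure_le_of_ae_le_add hbound
    _ ≤ ENNReal.ofReal (exp (-(v + k))) + ENNReal.ofReal (exp (-(v + k))) :=
        add_le_add (hW₁ _ hvk) (hW₂ _ hvk)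
    _ = ENNReal.ofReal (2 * exp (-v) * exp (-k)) := by
        rw [← ENNReal.ofReal_add (exp_nonneg _) (exp_nonneg _), ← two_mul, neg_add, exp_add,
          mul_assoc]

end Tails

theorem stmt4_general {Ω : Type*} [MeasurableSpace Ω] {P Q : Measure Ω}
    [IsProbabilityMeasure P] [IsProbabilityMeasure Q] {B r l v : ℝ}
    (hB : 0 ≤ B) (hr : r ≤ 1) (hl : 1 ≤ l) (hv : 1 ≤ v) {W₁ W₂ : Ω → ℝ}
    (hbound : ∀ᵐ ω ∂P, |llr P Q ω| ≤ W₁ ω + W₂ ω + l)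
    (hW₁ : ∀ t : ℝ, 1 ≤ t → P {ω | B * t ^ r ≤ W₁ ω} ≤ ENNReal.ofReal (exp (-t)))
    (hW₂ : ∀ t : ℝ, 1 ≤ t → P {ω | B * t ^ r ≤ W₂ ω} ≤ ENNReal.ofReal (exp (-t))) :
    ∫⁻ ω, ENNReal.ofReal (llr P Q ω ^ 2) ∂P
      ≤ ENNReal.ofReal (3 * (2 * B * v ^ r + l) ^ 2) * klDiv P Q
        + ENNReal.ofReal (64 * (2 * B * v ^ r + l) ^ 2 * exp (-v)) := by
  set M := 2 * B * v ^ r + l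
  have hM : 1 ≤ M := le_add_of_nonneg_of_le (by positivity) hl
  have hmeas : Measurable (llr P Q) := measurable_llr P Q
  have hset : MeasurableSet {ω | M ≤ |llr P Q ω|} := measurableSet_le measurable_const hmeas.norm
  have htail : ∫⁻ ω in {ω | M ≤ |llr P Q ω|}, ENNReal.ofReal (llr P Q ω ^ 2) ∂P
      ≤ ENNReal.ofReal (32 * (2 * exp (-v) * M ^ 2)) :=
    setLIntegral_sq_le_of_exp_tail hmeas (by positivity)
      (measure_succ_mul_le_of_rpow_tails hB hr (by positivity) hv hbound hW₁ hW₂)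
  have hbulk : ∫⁻ ω in {ω | M ≤ |llr P Q ω|}ᶜ, ENNReal.ofReal (llr P Q ω ^ 2) ∂P
      ≤ ENNReal.ofReal (3 * M ^ 2) * klDiv P Q := by
    rw [klDiv_eq_informationTheory_klDiv (by simp)]
    refine (setLIntegral_llr_sq_le_klDiv (by positivity)).trans ?_
    gcongr
    nlinarith
  rw [← lintegral_add_compl _ hset, add_comm]
  refine add_le_add hbulk (htail.trans_eq ?_)
  ring_nf

/-- Control of the second moment of the log-likelihood ratio `L = log (dP/dQ)` by the
Kullback-Leibler divergence, when `|L| ≤ W₁ + W₂ + log(1/σ)` for random variables `W₁, W₂`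
with subpolynomial tails. -/
theorem stmt4 {Ω : Type*} [MeasurableSpace Ω] (P Q : Measure Ω)
    [IsProbabilityMeasure P] [IsProbabilityMeasure Q]
    (hPQ : P ≪ Q)
    (L : Ω → ℝ) (hL : L = fun ω => Real.log (P.rnDeriv Q ω).toReal)
    (σ : ℝ) (hσ0 : 0 < σ) (hσ1 : σ ≤ Real.exp (-2))
    (B : ℝ) (hB : 1 ≤ B) (r : ℝ) (hr0 : 0 ≤ r) (hr1 : r ≤ 1)
    (W₁ W₂ : Ω → ℝ) (hW₁ : Measurable W₁) (hW₂ : Measurable W₂)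
    (hW₁nn : ∀ ω, 0 ≤ W₁ ω) (hW₂nn : ∀ ω, 0 ≤ W₂ ω)
    (hbound : ∀ᵐ ω ∂P, |L ω| ≤ W₁ ω + W₂ ω + Real.log (1 / σ))
    (hW₁tail : ∀ t : ℝ, 1 ≤ t → P {ω | B * t ^ r ≤ W₁ ω} ≤ ENNReal.ofReal (Real.exp (-t)))
    (hW₂tail : ∀ t : ℝ, 1 ≤ t → P {ω | B * t ^ r ≤ W₂ ω} ≤ ENNReal.ofReal (Real.exp (-t))) :
    ∀ v : ℝ, 1 ≤ v →
      ∫⁻ ω, ENNReal.ofReal ((L ω) ^ 2) ∂P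
        ≤ ENNReal.ofReal (3 * (2 * B * v ^ r + Real.log (1 / σ)) ^ 2) * klDiv P Q
          + ENNReal.ofReal (64 * (2 * B * v ^ r + Real.log (1 / σ)) ^ 2 * Real.exp (-v)) := by
  subst hL
  exact fun v hv => stmt4_general (zero_le_one.trans hB) hr1
    (one_le_two.trans (le_log_one_div hσ0 hσ1)) hv hbound hW₁tail hW₂tail
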